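/- arXiv:1406.3877 — 2 statements merged into one kernel-verified Lean document; each statement's English description precedes it below -/
import Mathlib

section
/- (Uniqueness of categoriser valuation) For every n×n attack matrix D with entries in {0,1}, the categoriser map F has exactly one fixed point in [0,1]^n: if u, w ∈ [0,1]^n satisfy F(u) = u and F(w) = w, then u = w. -/
/-!
The categoriser map is strictly contracting for Thompson's part metric. Fixed points are positive;
let `M` be the largest of all ratios `u i / w i` and `w i / u i`, so that `u ≤ M • w` and
`w ≤ M • u`. If `M > 1`, then `1 + ∑ D i j * w j ≤ 1 + M * ∑ D i j * u j < M * (1 + ∑ D i j * u j)`,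
and taking reciprocals gives `u i < M * w i` for every `i`; by symmetry `w i < M * u i`, which
contradicts that `M` is attained. Hence `M ≤ 1` and `u = w`.
-/

/-- The categoriser map of an attack matrix `D`. -/
noncomputable def catF {n : ℕ} (D : Fin n → Fin n → ℝ) (v : Fin n → ℝ) : Fin n → ℝ :=
  fun i => 1 / (1 + ∑ j, D i j * v j)

/-- One step of the strict contraction: the additive constant `1` in the denominator turns the bound
`w ≤ M • u` with `M > 1` into a strict one after applying `catF D`. -/
lemma catF_lt_mul_catF {n : ℕ} {D : Fin n → Fin n → ℝ} (hD : ∀ i j, 0 ≤ D i j)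
    {u w : Fin n → ℝ} (hu : ∀ i, 0 ≤ u i) (hw : ∀ i, 0 ≤ w i) {M : ℝ} (hM : 1 < M)
    (h : ∀ j, w j ≤ M * u j) (i : Fin n) : catF D u i < M * catF D w i := by
  have hSu : 0 ≤ ∑ j, D i j * u j := Finset.sum_nonneg fun j _ => mul_nonneg (hD i j) (hu j)
  have hSw : 0 ≤ ∑ j, D i j * w j := Finset.sum_nonneg fun j _ => mul_nonneg (hD i j) (hw j)
  have hS : ∑ j, D i j * w j ≤ M * ∑ j, D i j * u j := by
    rw [Finset.mul_sum]
    refine Finset.sum_le_sum fun j _ => ?_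
    have := mul_le_mul_of_nonneg_left (h j) (hD i j)
    linarith
  unfold catF
  rw [mul_one_div, div_lt_div_iff₀ (by linarith) (by linarith)]
  linarith

lemma catF_pos {n : ℕ} {D : Fin n → Fin n → ℝ} (hD : ∀ i j, 0 ≤ D i j)
    {u : Fin n → ℝ} (hu : ∀ i, 0 ≤ u i) (i : Fin n) : 0 < catF D u i := by
  have : 0 ≤ ∑ j, D i j * u j := Finset.sum_nonneg fun j _ => mul_nonneg (hD i j) (hu j)
  unfold catF
  positivity

theorem stmt_2 (n : ℕ) (D : Fin n → Fin n → ℝ)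
    (hD : ∀ i j, D i j = 0 ∨ D i j = 1)
    (u w : Fin n → ℝ)
    (hu : u ∈ Set.Icc (0 : Fin n → ℝ) 1) (hw : w ∈ Set.Icc (0 : Fin n → ℝ) 1)
    (hfu : catF D u = u) (hfw : catF D w = w) :
    u = w := by
  have hD0 : ∀ i j, 0 ≤ D i j := fun i j => by rcases hD i j with h | h <;> simp [h]
  have hu0 : ∀ i, 0 < u i := fun i => by simpa [hfu] using catF_pos hD0 hu.1 i
  have hw0 : ∀ i, 0 < w i := fun i => by simpa [hfw] using catF_pos hD0 hw.1 i
  rcases isEmpty_or_nonempty (Fin n) with _ | _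
  · exact Subsingleton.elim _ _
  obtain ⟨k, hk⟩ := Finite.exists_max fun i => max (u i / w i) (w i / u i)
  set M := max (u k / w k) (w k / u k) with hMdef
  have huM : ∀ i, u i ≤ M * w i := fun i =>
    (div_le_iff₀ (hw0 i)).1 ((le_max_left _ _).trans (hk i))
  have hwM : ∀ i, w i ≤ M * u i := fun i =>
    (div_le_iff₀ (hu0 i)).1 ((le_max_right _ _).trans (hk i))
  have hM : M ≤ 1 := by
    by_contra! hM
    have h1 := catF_lt_mul_catF hD0 hu.1 hw.1 hM hwM k
    have h2 := catF_lt_mul_catF hD0 hw.1 hu.1 hM huM k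
    rw [hfu, hfw, ← div_lt_iff₀ (hw0 k)] at h1
    rw [hfu, hfw, ← div_lt_iff₀ (hu0 k)] at h2
    exact (max_lt h1 h2).ne hMdef.symm
  ext i
  have h1 := mul_le_mul_of_nonneg_right hM (hw0 i).le
  have h2 := mul_le_mul_of_nonneg_right hM (hu0 i).le
  linarith [huM i, hwM i]
end

section
/- (Sandwiching the fixed point) Let D be an n×n attack matrix with entries in {0,1}, F its categoriser map, v* its unique fixed point in [0,1]^n, and define u⁽⁰⁾ = 0 and u⁽ᵏ⁾ = F(u⁽ᵏ⁻¹⁾) for k ≥ 1. Then for every k ≥ 1, u⁽²ᵏ⁾ ≤ v* ≤ u⁽²ᵏ⁻¹⁾ componentwise. -/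
theorem catF_nonneg {n : ℕ} {D : Fin n → Fin n → ℝ} (hD : ∀ i j, 0 ≤ D i j)
    {v : Fin n → ℝ} (hv : 0 ≤ v) : 0 ≤ catF D v := by
  intro i
  have h : 0 ≤ ∑ j, D i j * v j := Finset.sum_nonneg fun j _ => mul_nonneg (hD i j) (hv j)
  change 0 ≤ 1 / (1 + ∑ j, D i j * v j)
  positivity

/-- Nonnegativity of the smaller vector keeps both denominators positive. -/
theorem catF_antitone {n : ℕ} {D : Fin n → Fin n → ℝ} (hD : ∀ i j, 0 ≤ D i j)
    {v w : Fin n → ℝ} (hv : 0 ≤ v) (hvw : v ≤ w) : catF D w ≤ catF D v := by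
  intro i
  have h : 0 ≤ ∑ j, D i j * v j := Finset.sum_nonneg fun j _ => mul_nonneg (hD i j) (hv j)
  have h' : ∑ j, D i j * v j ≤ ∑ j, D i j * w j :=
    Finset.sum_le_sum fun j _ => mul_le_mul_of_nonneg_left (hvw j) (hD i j)
  exact one_div_le_one_div_of_le (by linarith) (by linarith)

theorem stmt_9 (n : ℕ) (D : Fin n → Fin n → ℝ)
    (hD : ∀ i j, D i j = 0 ∨ D i j = 1)
    (vstar : Fin n → ℝ) (hvstar : vstar ∈ Set.Icc (0 : Fin n → ℝ) 1)
    (hfix : catF D vstar = vstar)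
    (u : ℕ → Fin n → ℝ) (hu0 : u 0 = 0)
    (huk : ∀ k, u (k + 1) = catF D (u k)) :
    ∀ k ≥ 1, ∀ i, u (2 * k) i ≤ vstar i ∧ vstar i ≤ u (2 * k - 1) i := by
  have hD' : ∀ i j, 0 ≤ D i j := fun i j => by rcases hD i j with h | h <;> simp [h]
  have odd_step : ∀ k, 0 ≤ u k → u k ≤ vstar → vstar ≤ u (k + 1) := fun k h0 h => by
    rw [huk, ← hfix]
    exact catF_antitone hD' h0 (hfix.symm ▸ h)
  have even : ∀ k, 0 ≤ u (2 * k) ∧ u (2 * k) ≤ vstar := by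
    intro k
    induction k with
    | zero => simpa [hu0] using hvstar.1
    | succ k ih =>
      have h := odd_step _ ih.1 ih.2
      have e : u (2 * (k + 1)) = catF D (u (2 * k + 1)) := huk (2 * k + 1)
      rw [e]
      exact ⟨catF_nonneg hD' (hvstar.1.trans h),
        (catF_antitone hD' hvstar.1 h).trans_eq hfix⟩
  intro k hk i
  obtain ⟨m, rfl⟩ := Nat.exists_eq_add_of_le' hk
  exact ⟨(even (m + 1)).2 i, odd_step (2 * m) (even m).1 (even m).2 i⟩
end
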